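/- Let 0<θ<1, 1≤p₀,p₁<∞ and 1≤q₀,q₁<∞. Let {t_k}⊂L_{p₀}^loc and {w_k}⊂L_{p₁}^loc be weight sequences such that there is C>0 with M_{Q,p₀}(t_k)·M_{Q,(1-θ)(p₀/(1-θ))′}(t_k^{-1}) ≤ C and M_{Q,p₁}(w_k)·M_{Q,θ(p₁/θ)′}(w_k^{-1}) ≤ C for every k∈ℤ and every cube Q. Put 1/p := (1-θ)/p₀ + θ/p₁, 1/q := (1-θ)/q₀ + θ/q₁ and ω_k := t_k^{1-θ}w_k^{θ}. Then the Calderón product satisfies (ḃ_{p₀,q₀}(ℝ^n,{t_k}))^{1-θ}·(ḃ_{p₁,q₁}(ℝ^n,{w_k}))^{θ} = ḃ_{p,q}(ℝ^n,{ω_k}) with equivalence of norms. -/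

import Mathlib

/-!
At generation `k` the dyadic cubes partition `ℝ^n`, so the `ḃ`-norm is the norm of `ℓ^q(ℓ^p)` with
the weights `2^{kn/2} ‖t_k‖_{L^p(Q_{k,m})}` (`bNorm_eq_mixedNorm`). The statement thus splits into a
comparison of weights and the classical Calderón product of the spaces `ℓ^q(ℓ^p)`.

*Weights.* Hölder's inequality gives `‖ω‖_{L^p(Q)} ≤ ‖t‖_{L^{p₀}(Q)}^{1-θ} ‖w‖_{L^{p₁}(Q)}^θ`
(`cubeNorm_le`). For the converse, take averages over `Q` and integrate
`1 = t^{-(1-θ)} w^{-θ} ω` with Hölder's inequality: this bounds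
`M(t⁻¹)^{1-θ} M(w⁻¹)^θ M(ω)` from below by `1` (`one_le_prod`), and the Muckenhoupt conditions
bound `M(t)^{1-θ} M(w)^θ M(t⁻¹)^{1-θ} M(w⁻¹)^θ` by `C^{1-θ} D^θ` (`le_cubeNorm`).

*Mixed sequence spaces.* One inclusion is Hölder's inequality applied twice (`mixedNorm_holder`).
For the other, with `S_k = ‖A_{k,·}‖_{ℓ^p}` the families
`G = A^{p/p₀} S^{q/q₀ - p/p₀}` and `H = A^{p/p₁} S^{q/q₁ - p/p₁}` satisfy `A = G^{1-θ} H^θ`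
(`calFactor_mul`) and have norms `‖A‖^{q/q₀}` and `‖A‖^{q/q₁}` (`mixedNorm_calFactor`), whose
weighted product is `‖A‖`.

The lower estimate therefore holds with constant `1`, the upper one with `C^{1-θ} D^θ`.
-/

open MeasureTheory ENNReal
noncomputable section

abbrev Rn (n : ℕ) := Fin n → ℝ

/-- Complex sequences indexed by `ℤ × ℤ^n`. -/
abbrev CSeq (n : ℕ) := ℤ → (Fin n → ℤ) → ℂ

def cube {n : ℕ} (a : Rn n) (h : ℝ) : Set (Rn n) :=
  {x | ∀ i, a i ≤ x i ∧ x i < a i + h}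

/-- The dyadic cube `Q_{k,m} = 2^{-k}([0,1)^n + m)`. -/
def dyadic (n : ℕ) (k : ℤ) (m : Fin n → ℤ) : Set (Rn n) :=
  {x | ∀ i, (m i : ℝ) * (2:ℝ) ^ (-k) ≤ x i ∧ x i < ((m i : ℝ) + 1) * (2:ℝ) ^ (-k)}

/-- `M_{Q,s}(f)`, the `s`-average of `f` over `Q` (essential supremum if `s = ∞`). -/
def avgE {n : ℕ} (Q : Set (Rn n)) (s : ℝ≥0∞) (f : Rn n → ℝ≥0∞) : ℝ≥0∞ :=
  if s = ∞ then essSup f (volume.restrict Q)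
  else ((volume Q)⁻¹ * ∫⁻ x in Q, f x ^ s.toReal) ^ (1 / s.toReal)

def IsWeight {n : ℕ} (γ : Rn n → ℝ≥0∞) : Prop :=
  Measurable γ ∧ (∀ᵐ x, 0 < γ x ∧ γ x < ∞) ∧
    ∀ (a : Rn n) (h : ℝ), 0 < h → ∫⁻ x in cube a h, γ x < ∞

/-- The quasi-norm of the sequence space `ḟ_{p,q}(ℝ^n, {t_k})` (finite `p,q`). -/
def fNorm (n : ℕ) (p q : ℝ) (t : ℤ → Rn n → ℝ≥0∞) (lam : CSeq n) : ℝ≥0∞ :=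
  (∫⁻ x, (∑' (k : ℤ) (m : Fin n → ℤ),
      ((2:ℝ≥0∞) ^ (((k:ℝ) * n) * q / 2) * t k x ^ q * (‖lam k m‖₊ : ℝ≥0∞) ^ q) *
        (dyadic n k m).indicator (fun _ => (1:ℝ≥0∞)) x) ^ (p / q)) ^ (1 / p)

/-- The quasi-norm of the sequence space `ḃ_{p,q}(ℝ^n, {t_k})` (finite `p,q`). -/
def bNorm (n : ℕ) (p q : ℝ) (t : ℤ → Rn n → ℝ≥0∞) (lam : CSeq n) : ℝ≥0∞ :=
  (∑' k : ℤ, ((2:ℝ≥0∞) ^ (((k:ℝ) * n) / 2) *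
      (∫⁻ x, (t k x * ∑' m : Fin n → ℤ,
        (‖lam k m‖₊ : ℝ≥0∞) * (dyadic n k m).indicator (fun _ => (1:ℝ≥0∞)) x) ^ p) ^ (1/p)) ^ q
    ) ^ (1/q)

/-- The quasi-norm of the sequence space `ḟ_{∞,q}(ℝ^n, {t_k})`. -/
def fInftyNorm (n : ℕ) (q : ℝ) (t : ℤ → Rn n → ℝ≥0∞) (lam : CSeq n) : ℝ≥0∞ :=
  ⨆ (j : ℤ) (m₀ : Fin n → ℤ),
    ((volume (dyadic n j m₀))⁻¹ *
      ∫⁻ x in dyadic n j m₀,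
        ∑' (k : {k : ℤ // j ≤ k}) (m : Fin n → ℤ),
          (2:ℝ≥0∞) ^ ((((k:ℤ):ℝ) * n) * q / 2) * t (k:ℤ) x ^ q * (‖lam (k:ℤ) m‖₊ : ℝ≥0∞) ^ q *
            (dyadic n (k:ℤ) m).indicator (fun _ => (1:ℝ≥0∞)) x) ^ (1 / q)

/-- The quasi-norm of the Calderón product `X₀^{1-θ}·X₁^{θ}` of two quasi-normed lattices
of sequences, given through their quasi-norms `N₀`, `N₁`. -/
def calNorm (n : ℕ) (θ : ℝ) (N₀ N₁ : CSeq n → ℝ≥0∞) (lam : CSeq n) : ℝ≥0∞ :=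
  ⨅ (g : CSeq n) (h : CSeq n)
    (_ : ∀ (k : ℤ) (m : Fin n → ℤ),
      (‖lam k m‖₊ : ℝ≥0∞) ≤ (‖g k m‖₊ : ℝ≥0∞) ^ (1 - θ) * (‖h k m‖₊ : ℝ≥0∞) ^ θ),
    N₀ g ^ (1 - θ) * N₁ h ^ θ

/-! ### Hölder's inequality for interpolated exponents -/

lemma interp_pos {θ p₀ p₁ p : ℝ} (hθ : 0 < θ) (hθ1 : θ < 1) (hp₀ : 1 ≤ p₀) (hp₁ : 1 ≤ p₁)
    (hp : 1 / p = (1 - θ) / p₀ + θ / p₁) : 0 < p := by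
  have h1 : 0 < (1 - θ) / p₀ := div_pos (by linarith) (by linarith)
  have h2 : 0 < θ / p₁ := div_pos (by linarith) (by linarith)
  exact one_div_pos.mp (by rw [hp]; linarith)

lemma interp_mul {θ p₀ p₁ p : ℝ} (hp0 : 0 < p)
    (hp : 1 / p = (1 - θ) / p₀ + θ / p₁) : (1 - θ) * (p / p₀) + θ * (p / p₁) = 1 := by
  have : (1 - θ) * (p / p₀) + θ * (p / p₁) = p * ((1 - θ) / p₀ + θ / p₁) := by ring
  rw [this, ← hp, mul_one_div_cancel hp0.ne']

lemma holder_lintegral {α : Type*} [MeasurableSpace α] {μ : Measure α} {f g : α → ℝ≥0∞}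
    (hf : AEMeasurable f μ) (hg : AEMeasurable g μ) {θ p₀ p₁ p : ℝ}
    (hθ : 0 < θ) (hθ1 : θ < 1) (hp₀ : 1 ≤ p₀) (hp₁ : 1 ≤ p₁)
    (hp : 1 / p = (1 - θ) / p₀ + θ / p₁) :
    (∫⁻ x, (f x ^ (1 - θ) * g x ^ θ) ^ p ∂μ) ^ (1 / p) ≤
      ((∫⁻ x, f x ^ p₀ ∂μ) ^ (1 / p₀)) ^ (1 - θ) * ((∫⁻ x, g x ^ p₁ ∂μ) ^ (1 / p₁)) ^ θ := by
  have hp0 := interp_pos hθ hθ1 hp₀ hp₁ hp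
  have h1θ : 0 < 1 - θ := by linarith
  have hp₀' : 0 < p₀ := by linarith
  have hp₁' : 0 < p₁ := by linarith
  have key := ENNReal.lintegral_mul_norm_pow_le (μ := μ) (hf.pow_const p₀) (hg.pow_const p₁)
    (p := (1 - θ) * (p / p₀)) (q := θ * (p / p₁)) (by positivity) (by positivity)
    (interp_mul hp0 hp)
  have e : ∀ x, (f x ^ (1 - θ) * g x ^ θ) ^ p =
      (f x ^ p₀) ^ ((1 - θ) * (p / p₀)) * (g x ^ p₁) ^ (θ * (p / p₁)) := by
    intro x
    rw [ENNReal.mul_rpow_of_nonneg _ _ hp0.le, ← ENNReal.rpow_mul, ← ENNReal.rpow_mul,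
      ← ENNReal.rpow_mul, ← ENNReal.rpow_mul]
    congr 2 <;> field_simp
  simp_rw [e]
  refine (ENNReal.rpow_le_rpow key (by positivity : 0 ≤ 1 / p)).trans_eq ?_
  rw [ENNReal.mul_rpow_of_nonneg _ _ (by positivity), ← ENNReal.rpow_mul, ← ENNReal.rpow_mul,
    ← ENNReal.rpow_mul, ← ENNReal.rpow_mul]
  congr 2 <;> field_simp

lemma holder_tsum {ι : Type*} (f g : ι → ℝ≥0∞) {θ p₀ p₁ p : ℝ}
    (hθ : 0 < θ) (hθ1 : θ < 1) (hp₀ : 1 ≤ p₀) (hp₁ : 1 ≤ p₁)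
    (hp : 1 / p = (1 - θ) / p₀ + θ / p₁) :
    (∑' x, (f x ^ (1 - θ) * g x ^ θ) ^ p) ^ (1 / p) ≤
      ((∑' x, f x ^ p₀) ^ (1 / p₀)) ^ (1 - θ) * ((∑' x, g x ^ p₁) ^ (1 / p₁)) ^ θ := by
  let _ : MeasurableSpace ι := ⊤
  have := holder_lintegral (μ := Measure.count) (f := f) (g := g)
    measurable_from_top.aemeasurable measurable_from_top.aemeasurable hθ hθ1 hp₀ hp₁ hp
  simpa only [lintegral_count] using this

/-! ### The mixed sequence spaces and their Calderón product -/

/-- The norm of `ℓ^q(ι; ℓ^p(κ))`, for families with values in `[0, ∞]`. -/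
def mixedNorm {ι κ : Type*} (p q : ℝ) (a : ι → κ → ℝ≥0∞) : ℝ≥0∞ :=
  (∑' k, ((∑' m, a k m ^ p) ^ (1 / p)) ^ q) ^ (1 / q)

lemma mixedNorm_mono {ι κ : Type*} {p q : ℝ} (hp : 0 < p) (hq : 0 < q) {a b : ι → κ → ℝ≥0∞}
    (h : ∀ k m, a k m ≤ b k m) : mixedNorm p q a ≤ mixedNorm p q b := by
  unfold mixedNorm
  gcongr with k m
  exact h k m

lemma mixedNorm_const_mul {ι κ : Type*} {p q : ℝ} (hp : 0 < p) (hq : 0 < q) (c : ℝ≥0∞)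
    (a : ι → κ → ℝ≥0∞) : mixedNorm p q (fun k m => c * a k m) = c * mixedNorm p q a := by
  have h1 : 0 ≤ 1 / p := by positivity
  have h2 : 0 ≤ 1 / q := by positivity
  unfold mixedNorm
  simp_rw [ENNReal.mul_rpow_of_nonneg _ _ hp.le, ENNReal.tsum_mul_left,
    ENNReal.mul_rpow_of_nonneg _ _ h1, ← ENNReal.rpow_mul, mul_one_div_cancel hp.ne',
    ENNReal.rpow_one, ENNReal.mul_rpow_of_nonneg _ _ hq.le, ENNReal.tsum_mul_left,
    ENNReal.mul_rpow_of_nonneg _ _ h2, ← ENNReal.rpow_mul, mul_one_div_cancel hq.ne',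
    ENNReal.rpow_one]

lemma mixedNorm_holder {ι κ : Type*} (a b : ι → κ → ℝ≥0∞) {θ p₀ p₁ q₀ q₁ p q : ℝ}
    (hθ : 0 < θ) (hθ1 : θ < 1) (hp₀ : 1 ≤ p₀) (hp₁ : 1 ≤ p₁) (hq₀ : 1 ≤ q₀) (hq₁ : 1 ≤ q₁)
    (hp : 1 / p = (1 - θ) / p₀ + θ / p₁) (hq : 1 / q = (1 - θ) / q₀ + θ / q₁) :
    mixedNorm p q (fun k m => a k m ^ (1 - θ) * b k m ^ θ) ≤
      mixedNorm p₀ q₀ a ^ (1 - θ) * mixedNorm p₁ q₁ b ^ θ := by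
  have hq0 := interp_pos hθ hθ1 hq₀ hq₁ hq
  unfold mixedNorm
  refine le_trans ?_ (holder_tsum _ _ hθ hθ1 hq₀ hq₁ hq)
  gcongr with k
  exact holder_tsum _ _ hθ hθ1 hp₀ hp₁ hp

/-- The factors of the optimal factorization: `S k` stands for the `ℓ^p`-norm of `A k`. Rows with
`S k = 0` are set to zero, so that a negative exponent of `S k` does no harm. -/
def calFactor {ι κ : Type*} (p q p₀ q₀ : ℝ) (A : ι → κ → ℝ≥0∞) (k : ι) (m : κ) : ℝ≥0∞ :=
  if ∑' m, A k m ^ p = 0 then 0 else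
    A k m ^ (p / p₀) * ((∑' m, A k m ^ p) ^ (1 / p)) ^ (q / q₀ - p / p₀)

section CalFactor

variable {ι κ : Type*} {p q : ℝ} {A : ι → κ → ℝ≥0∞}

lemma row_ne_top (hp : 0 < p) (hq : 0 < q) (hA : mixedNorm p q A ≠ ∞) (k : ι) :
    ∑' m, A k m ^ p ≠ ∞ := by
  intro h
  apply hA
  unfold mixedNorm
  rw [ENNReal.rpow_eq_top_iff_of_pos (by positivity)]
  refine ENNReal.tsum_eq_top_of_eq_top ⟨k, ?_⟩
  rw [h, ENNReal.top_rpow_of_pos (by positivity), ENNReal.top_rpow_of_pos hq]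

lemma entry_ne_top (hp : 0 < p) (hq : 0 < q) (hA : mixedNorm p q A ≠ ∞) (k : ι) (m : κ) :
    A k m ≠ ∞ := by
  have := ENNReal.ne_top_of_tsum_ne_top (row_ne_top hp hq hA k) m
  rwa [Ne, ENNReal.rpow_eq_top_iff_of_pos hp] at this

lemma rowNorm_ne_zero (hp : 0 < p) {k : ι} (hS : ∑' m, A k m ^ p ≠ 0) :
    (∑' m, A k m ^ p) ^ (1 / p) ≠ 0 := by
  rw [Ne, ENNReal.rpow_eq_zero_iff_of_pos (by positivity)]
  exact hS

lemma rowNorm_ne_top (hp : 0 < p) (hq : 0 < q) (hA : mixedNorm p q A ≠ ∞) (k : ι) :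
    (∑' m, A k m ^ p) ^ (1 / p) ≠ ∞ :=
  ENNReal.rpow_ne_top_of_nonneg (by positivity) (row_ne_top hp hq hA k)

lemma calFactor_ne_top (hp : 0 < p) (hq : 0 < q) {p₀ q₀ : ℝ} (hp₀ : 0 < p₀)
    (hA : mixedNorm p q A ≠ ∞) (k : ι) (m : κ) : calFactor p q p₀ q₀ A k m ≠ ∞ := by
  unfold calFactor
  split_ifs with hS
  · exact ENNReal.zero_ne_top
  · exact ENNReal.mul_ne_top
      (ENNReal.rpow_ne_top_of_nonneg (by positivity) (entry_ne_top hp hq hA k m))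
      (ENNReal.rpow_ne_top_of_ne_zero (rowNorm_ne_zero hp hS) (rowNorm_ne_top hp hq hA k))

lemma mixedNorm_calFactor (hp : 0 < p) (hq : 0 < q) {p₀ q₀ : ℝ} (hp₀ : 0 < p₀) (hq₀ : 0 < q₀)
    (hA : mixedNorm p q A ≠ ∞) :
    mixedNorm p₀ q₀ (calFactor p q p₀ q₀ A) = mixedNorm p q A ^ (q / q₀) := by
  have hk : ∀ k, (∑' m, calFactor p q p₀ q₀ A k m ^ p₀) ^ (1 / p₀) =
      ((∑' m, A k m ^ p) ^ (1 / p)) ^ (q / q₀) := by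
    intro k
    by_cases hS : ∑' m, A k m ^ p = 0
    · simp only [calFactor, hS, if_true]
      rw [ENNReal.zero_rpow_of_pos hp₀, tsum_zero, ENNReal.zero_rpow_of_pos (by positivity),
        ENNReal.zero_rpow_of_pos (by positivity), ENNReal.zero_rpow_of_pos (by positivity)]
    · simp only [calFactor, hS, if_false]
      have h1 : ∀ m, (A k m ^ (p / p₀) *
          ((∑' m, A k m ^ p) ^ (1 / p)) ^ (q / q₀ - p / p₀)) ^ p₀ =
          A k m ^ p * (((∑' m, A k m ^ p) ^ (1 / p)) ^ (q / q₀ - p / p₀)) ^ p₀ := by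
        intro m
        rw [ENNReal.mul_rpow_of_nonneg _ _ hp₀.le, ← ENNReal.rpow_mul (A k m),
          div_mul_cancel₀ _ hp₀.ne']
      simp_rw [h1]
      rw [ENNReal.tsum_mul_right, ENNReal.mul_rpow_of_nonneg _ _ (by positivity)]
      set S := ∑' m, A k m ^ p with hSdef
      have h2 : S ^ (1 / p₀) = (S ^ (1 / p)) ^ (p / p₀) := by
        rw [← ENNReal.rpow_mul]; congr 1; field_simp
      rw [h2, ← ENNReal.rpow_mul _ p₀, mul_one_div_cancel hp₀.ne', ENNReal.rpow_one,
        ← ENNReal.rpow_add _ _ (rowNorm_ne_zero hp hS) (rowNorm_ne_top hp hq hA k)]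
      congr 1; ring
  unfold mixedNorm
  simp_rw [hk]
  simp_rw [← ENNReal.rpow_mul _ (q / q₀) q₀, div_mul_cancel₀ q hq₀.ne']
  rw [← ENNReal.rpow_mul _ (1 / q)]
  congr 1; field_simp

lemma calFactor_mul {θ p₀ p₁ q₀ q₁ : ℝ} (hθ : 0 < θ) (hθ1 : θ < 1)
    (hp₀ : 1 ≤ p₀) (hp₁ : 1 ≤ p₁) (hq₀ : 1 ≤ q₀) (hq₁ : 1 ≤ q₁)
    (hp : 1 / p = (1 - θ) / p₀ + θ / p₁) (hq : 1 / q = (1 - θ) / q₀ + θ / q₁)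
    (hA : mixedNorm p q A ≠ ∞) (k : ι) (m : κ) :
    calFactor p q p₀ q₀ A k m ^ (1 - θ) * calFactor p q p₁ q₁ A k m ^ θ = A k m := by
  have hp0 := interp_pos hθ hθ1 hp₀ hp₁ hp
  have hq0 := interp_pos hθ hθ1 hq₀ hq₁ hq
  have h1θ : 0 < 1 - θ := by linarith
  by_cases hS : ∑' m, A k m ^ p = 0
  · have : A k m = 0 := by
      have := (ENNReal.tsum_eq_zero.mp hS) m
      rwa [ENNReal.rpow_eq_zero_iff_of_pos hp0] at this
    simp only [calFactor, hS, if_true, this]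
    rw [ENNReal.zero_rpow_of_pos hθ, mul_zero]
  · simp only [calFactor, hS, if_false]
    have hz := rowNorm_ne_zero hp0 hS
    have ht := rowNorm_ne_top hp0 hq0 hA k
    generalize (∑' m, A k m ^ p) ^ (1 / p) = R at hz ht ⊢
    rw [ENNReal.mul_rpow_of_nonneg _ _ h1θ.le, ENNReal.mul_rpow_of_nonneg _ _ hθ.le,
      mul_mul_mul_comm, ← ENNReal.rpow_mul, ← ENNReal.rpow_mul, ← ENNReal.rpow_mul,
      ← ENNReal.rpow_mul, ← ENNReal.rpow_add _ _ hz ht,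
      ← ENNReal.rpow_add_of_nonneg _ _ (by positivity) (by positivity)]
    have e1 := interp_mul hp0 hp
    have e2 := interp_mul hq0 hq
    have e3 : p / p₀ * (1 - θ) + p / p₁ * θ = 1 := by linarith
    have e4 : (q / q₀ - p / p₀) * (1 - θ) + (q / q₁ - p / p₁) * θ = 0 := by linarith
    rw [e3, e4, ENNReal.rpow_one, ENNReal.rpow_zero, mul_one]

end CalFactor

/-! ### Dyadic cubes and the discrete form of the norm -/

lemma dyadic_eq_cube (n : ℕ) (k : ℤ) (m : Fin n → ℤ) :
    dyadic n k m = cube (fun i => (m i : ℝ) * (2:ℝ) ^ (-k)) ((2:ℝ) ^ (-k)) := by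
  ext x; simp [dyadic, cube, add_mul]

lemma cube_eq_pi {n : ℕ} (a : Rn n) (h : ℝ) :
    cube a h = Set.univ.pi fun i => Set.Ico (a i) (a i + h) := by
  ext x; simp [cube]

lemma measurableSet_cube {n : ℕ} (a : Rn n) (h : ℝ) : MeasurableSet (cube a h) := by
  rw [cube_eq_pi]
  exact MeasurableSet.univ_pi fun i => measurableSet_Ico

lemma volume_cube {n : ℕ} (a : Rn n) (h : ℝ) : volume (cube a h) = ENNReal.ofReal h ^ n := by
  rw [cube_eq_pi, Real.volume_pi_Ico]
  simp

lemma volume_cube_ne_zero {n : ℕ} (a : Rn n) {h : ℝ} (hh : 0 < h) : volume (cube a h) ≠ 0 := by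
  rw [volume_cube]
  exact pow_ne_zero _ (by simpa using hh)

lemma volume_cube_ne_top {n : ℕ} (a : Rn n) (h : ℝ) : volume (cube a h) ≠ ∞ := by
  rw [volume_cube]
  exact ENNReal.pow_ne_top ENNReal.ofReal_ne_top

lemma measurableSet_dyadic (n : ℕ) (k : ℤ) (m : Fin n → ℤ) : MeasurableSet (dyadic n k m) := by
  rw [dyadic_eq_cube]; exact measurableSet_cube _ _

/-- The dyadic cubes of generation `k` partition `ℝ^n`. -/
lemma mem_dyadic_iff {n : ℕ} {k : ℤ} {m : Fin n → ℤ} {x : Rn n} :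
    x ∈ dyadic n k m ↔ m = fun i => ⌊x i * (2:ℝ) ^ k⌋ := by
  have h2 : (0:ℝ) < (2:ℝ) ^ k := by positivity
  simp only [dyadic, Set.mem_ofPred_eq, funext_iff, zpow_neg, ← div_eq_mul_inv]
  refine forall_congr' fun i => ?_
  rw [eq_comm, Int.floor_eq_iff, div_le_iff₀ h2, lt_div_iff₀ h2]

lemma lintegral_level {n : ℕ} {p : ℝ} (hp : 0 < p) {t : Rn n → ℝ≥0∞} (ht : Measurable t) (k : ℤ)
    (c : (Fin n → ℤ) → ℝ≥0∞) :
    ∫⁻ x, (t x * ∑' m : Fin n → ℤ,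
        c m * (dyadic n k m).indicator (fun _ => (1:ℝ≥0∞)) x) ^ p =
      ∑' m, c m ^ p * ∫⁻ x in dyadic n k m, t x ^ p := by
  have hpt : ∀ x, (t x * ∑' m : Fin n → ℤ,
      c m * (dyadic n k m).indicator (fun _ => (1:ℝ≥0∞)) x) ^ p =
      ∑' m, c m ^ p * (dyadic n k m).indicator (fun x => t x ^ p) x := by
    intro x
    set m₀ : Fin n → ℤ := fun i => ⌊x i * (2:ℝ) ^ k⌋ with hm₀
    have hx : x ∈ dyadic n k m₀ := mem_dyadic_iff.mpr rfl
    have hx' : ∀ m, m ≠ m₀ → x ∉ dyadic n k m := fun m hm h => hm (mem_dyadic_iff.mp h)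
    rw [tsum_eq_single m₀ (fun m hm => by simp [hx' m hm]),
      tsum_eq_single m₀ (fun m hm => by simp [hx' m hm])]
    simp only [hx, Set.indicator_of_mem, mul_one]
    rw [ENNReal.mul_rpow_of_nonneg _ _ hp.le, mul_comm]
  simp_rw [hpt]
  have hm : ∀ m, Measurable ((dyadic n k m).indicator fun x => t x ^ p) := fun m =>
    (ht.pow_const p).indicator (measurableSet_dyadic n k m)
  rw [lintegral_tsum fun m => ((hm m).const_mul _).aemeasurable]
  refine tsum_congr fun m => ?_
  rw [lintegral_const_mul _ (hm m), lintegral_indicator (measurableSet_dyadic n k m)]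

/-- The `L^p`-norm of the weight `t` over the dyadic cube `Q_{k,m}`. -/
def cubeNorm {n : ℕ} (p : ℝ) (t : Rn n → ℝ≥0∞) (k : ℤ) (m : Fin n → ℤ) : ℝ≥0∞ :=
  (∫⁻ x in dyadic n k m, t x ^ p) ^ (1 / p)

/-- The normalizing factor `2^{kn/2}`. -/
def scale (n : ℕ) (k : ℤ) : ℝ≥0∞ := (2:ℝ≥0∞) ^ (((k:ℝ) * n) / 2)

lemma scale_ne_zero (n : ℕ) (k : ℤ) : scale n k ≠ 0 :=
  (ENNReal.rpow_pos (by norm_num) (by norm_num)).ne'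

lemma scale_ne_top (n : ℕ) (k : ℤ) : scale n k ≠ ∞ :=
  ENNReal.rpow_ne_top_of_ne_zero (by norm_num) (by norm_num)

lemma bNorm_eq_mixedNorm {n : ℕ} {p q : ℝ} (hp : 0 < p) {t : ℤ → Rn n → ℝ≥0∞}
    (ht : ∀ k, Measurable (t k)) (lam : CSeq n) :
    bNorm n p q t lam =
      mixedNorm p q fun k m => (‖lam k m‖₊ : ℝ≥0∞) * (scale n k * cubeNorm p (t k) k m) := by
  unfold bNorm mixedNorm
  congr 1
  refine tsum_congr fun k => ?_
  congr 1
  rw [lintegral_level hp (ht k)]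
  have e : ∀ m, ((‖lam k m‖₊ : ℝ≥0∞) * (scale n k * cubeNorm p (t k) k m)) ^ p =
      scale n k ^ p * ((‖lam k m‖₊ : ℝ≥0∞) ^ p * ∫⁻ x in dyadic n k m, t k x ^ p) := by
    intro m
    rw [ENNReal.mul_rpow_of_nonneg _ _ hp.le, ENNReal.mul_rpow_of_nonneg _ _ hp.le, cubeNorm,
      ← ENNReal.rpow_mul _ (1 / p), one_div_mul_cancel hp.ne', ENNReal.rpow_one]
    ring
  simp_rw [e]
  rw [ENNReal.tsum_mul_left, ENNReal.mul_rpow_of_nonneg _ _ (by positivity),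
    ← ENNReal.rpow_mul (scale n k), mul_one_div_cancel hp.ne', ENNReal.rpow_one, scale]

lemma cubeNorm_ne_zero {n : ℕ} {p : ℝ} (hp : 0 < p) {t : Rn n → ℝ≥0∞} (ht : IsWeight t)
    (k : ℤ) (m : Fin n → ℤ) : cubeNorm p t k m ≠ 0 := by
  rw [cubeNorm, Ne, ENNReal.rpow_eq_zero_iff_of_pos (by positivity),
    lintegral_eq_zero_iff (ht.1.pow_const p)]
  intro h
  have hpos : ∀ᵐ x ∂(volume.restrict (dyadic n k m)), 0 < t x :=
    ae_restrict_of_ae (ht.2.1.mono fun x hx => hx.1)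
  have : ∀ᵐ x ∂(volume.restrict (dyadic n k m)), False := by
    filter_upwards [h, hpos] with x hx hx'
    rw [Pi.zero_apply, ENNReal.rpow_eq_zero_iff_of_pos hp] at hx
    exact hx'.ne' hx
  rw [Filter.eventually_false_iff_eq_bot, ae_eq_bot, Measure.restrict_eq_zero,
    dyadic_eq_cube] at this
  exact volume_cube_ne_zero _ (by positivity) this

lemma cubeNorm_ne_top {n : ℕ} {p : ℝ} (hp : 0 < p) {t : Rn n → ℝ≥0∞}
    (ht : ∀ (a : Rn n) (h : ℝ), 0 < h → ∫⁻ x in cube a h, t x ^ p < ∞)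
    (k : ℤ) (m : Fin n → ℤ) : cubeNorm p t k m ≠ ∞ := by
  refine ENNReal.rpow_ne_top_of_nonneg (by positivity) ?_
  rw [dyadic_eq_cube]
  exact (ht _ _ (by positivity)).ne

/-! ### Comparison of the cube norms of the three weights -/

lemma cubeNorm_le {n : ℕ} {θ p₀ p₁ p : ℝ} (hθ : 0 < θ) (hθ1 : θ < 1) (hp₀ : 1 ≤ p₀) (hp₁ : 1 ≤ p₁)
    (hp : 1 / p = (1 - θ) / p₀ + θ / p₁) {t w : Rn n → ℝ≥0∞} (ht : Measurable t)
    (hw : Measurable w) (k : ℤ) (m : Fin n → ℤ) :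
    cubeNorm p (fun x => t x ^ (1 - θ) * w x ^ θ) k m ≤
      cubeNorm p₀ t k m ^ (1 - θ) * cubeNorm p₁ w k m ^ θ :=
  holder_lintegral ht.aemeasurable hw.aemeasurable hθ hθ1 hp₀ hp₁ hp

lemma avgE_ofReal {n : ℕ} (Q : Set (Rn n)) {s : ℝ} (hs : 0 < s) (f : Rn n → ℝ≥0∞) :
    avgE Q (ENNReal.ofReal s) f = (∫⁻ x, f x ^ s ∂((volume Q)⁻¹ • volume.restrict Q)) ^ (1 / s) := by
  rw [avgE, if_neg ENNReal.ofReal_ne_top, ENNReal.toReal_ofReal hs.le, lintegral_smul_measure,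
    smul_eq_mul]

/-- On a probability space, `1 = t^{-(1-θ)} w^{-θ} · t^{1-θ} w^θ` is integrated with Hölder's
inequality. The exponents `u' = (p₀/(1-θ))'`, `v' = (p₁/θ)'` and `p` satisfy
`1/u' + 1/v' + 1/p = 2`, so the square root of this identity is what has to be integrated. -/
lemma one_le_prod {α : Type*} [MeasurableSpace α] {μ : Measure α} [IsProbabilityMeasure μ]
    {t w : α → ℝ≥0∞} (ht : Measurable t) (hw : Measurable w)
    (ht0 : ∀ᵐ x ∂μ, 0 < t x ∧ t x < ∞) (hw0 : ∀ᵐ x ∂μ, 0 < w x ∧ w x < ∞)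
    {θ p₀ p₁ p σ τ : ℝ} (hθ : 0 < θ) (hθ1 : θ < 1) (hp₀ : 1 ≤ p₀) (hp₁ : 1 ≤ p₁)
    (hp : 1 / p = (1 - θ) / p₀ + θ / p₁)
    (hσ : 0 < σ) (hτ : 0 < τ)
    (hσ' : (1 - θ) / σ = 1 - (1 - θ) / p₀) (hτ' : θ / τ = 1 - θ / p₁) :
    1 ≤ ((∫⁻ x, (t x)⁻¹ ^ σ ∂μ) ^ (1 / σ)) ^ (1 - θ) * ((∫⁻ x, (w x)⁻¹ ^ τ ∂μ) ^ (1 / τ)) ^ θ *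
      (∫⁻ x, (t x ^ (1 - θ) * w x ^ θ) ^ p ∂μ) ^ (1 / p) := by
  have hp0 := interp_pos hθ hθ1 hp₀ hp₁ hp
  have h1θ : 0 < 1 - θ := by linarith
  let F : Fin 3 → α → ℝ≥0∞ := ![fun x => (t x)⁻¹ ^ σ, fun x => (w x)⁻¹ ^ τ,
    fun x => (t x ^ (1 - θ) * w x ^ θ) ^ p]
  let e : Fin 3 → ℝ := ![(1 - θ) / σ / 2, θ / τ / 2, 1 / p / 2]
  have hF : ∀ i ∈ Finset.univ, AEMeasurable (F i) μ := by
    intro i _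
    fin_cases i
    · exact (ht.inv.pow_const σ).aemeasurable
    · exact (hw.inv.pow_const τ).aemeasurable
    · exact (((ht.pow_const _).mul (hw.pow_const _)).pow_const p).aemeasurable
  have he : ∑ i, e i = 1 := by
    simp only [e, Fin.sum_univ_three, Matrix.cons_val_zero, Matrix.cons_val_one,
      Matrix.cons_val]
    rw [hσ', hτ', hp]; ring
  have he0 : ∀ i ∈ Finset.univ, 0 ≤ e i := by
    intro i _
    fin_cases i
    · exact (by positivity : 0 ≤ (1 - θ) / σ / 2)
    · exact (by positivity : 0 ≤ θ / τ / 2)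
    · exact (by positivity : 0 ≤ 1 / p / 2)
  have key := ENNReal.lintegral_prod_norm_pow_le (μ := μ) Finset.univ hF he he0
  simp only [Fin.prod_univ_three, F, e, Matrix.cons_val_zero, Matrix.cons_val_one,
    Matrix.cons_val] at key
  have hone : ∫⁻ x, ((t x)⁻¹ ^ σ) ^ ((1 - θ) / σ / 2) * ((w x)⁻¹ ^ τ) ^ (θ / τ / 2) *
      ((t x ^ (1 - θ) * w x ^ θ) ^ p) ^ (1 / p / 2) ∂μ = 1 := by
    have : ∀ᵐ x ∂μ, ((t x)⁻¹ ^ σ) ^ ((1 - θ) / σ / 2) * ((w x)⁻¹ ^ τ) ^ (θ / τ / 2) *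
        ((t x ^ (1 - θ) * w x ^ θ) ^ p) ^ (1 / p / 2) = 1 := by
      filter_upwards [ht0, hw0] with x htx hwx
      have c1 : σ * ((1 - θ) / σ / 2) = (1 - θ) / 2 := by field_simp
      have c2 : τ * (θ / τ / 2) = θ / 2 := by field_simp
      have c3 : p * (1 / p / 2) = 1 / 2 := by field_simp
      rw [← ENNReal.rpow_mul, ← ENNReal.rpow_mul, ← ENNReal.rpow_mul, c1, c2, c3,
        ENNReal.mul_rpow_of_nonneg _ _ (by norm_num), ← ENNReal.rpow_mul, ← ENNReal.rpow_mul,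
        mul_one_div, mul_one_div, mul_mul_mul_comm, ENNReal.inv_rpow, ENNReal.inv_rpow,
        ENNReal.inv_mul_cancel, ENNReal.inv_mul_cancel, one_mul]
      · exact (ENNReal.rpow_pos hwx.1 hwx.2.ne).ne'
      · exact ENNReal.rpow_ne_top_of_ne_zero hwx.1.ne' hwx.2.ne
      · exact (ENNReal.rpow_pos htx.1 htx.2.ne).ne'
      · exact ENNReal.rpow_ne_top_of_ne_zero htx.1.ne' htx.2.ne
    rw [lintegral_congr_ae this]; simp
  rw [hone] at key
  have key2 := ENNReal.rpow_le_rpow key (by norm_num : (0:ℝ) ≤ 2)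
  rw [ENNReal.one_rpow, ENNReal.mul_rpow_of_nonneg _ _ (by norm_num),
    ENNReal.mul_rpow_of_nonneg _ _ (by norm_num)] at key2
  refine key2.trans_eq ?_
  simp_rw [← ENNReal.rpow_mul]
  rw [show (1 - θ) / σ / 2 * 2 = 1 / σ * (1 - θ) by ring,
    show θ / τ / 2 * 2 = 1 / τ * θ by ring, show 1 / p / 2 * 2 = 1 / p by ring]

/-- The reverse of `cubeNorm_le`, up to a constant: here the Muckenhoupt conditions enter. -/
lemma le_cubeNorm {n : ℕ} {θ p₀ p₁ p : ℝ} (hθ : 0 < θ) (hθ1 : θ < 1) (hp₀ : 1 ≤ p₀) (hp₁ : 1 ≤ p₁)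
    (hp : 1 / p = (1 - θ) / p₀ + θ / p₁) {t w : Rn n → ℝ≥0∞} (ht : IsWeight t)
    (hw : IsWeight w) (k : ℤ) (m : Fin n → ℤ) {C D : ℝ≥0∞}
    (hC : avgE (dyadic n k m) (ENNReal.ofReal p₀) t *
        avgE (dyadic n k m) (ENNReal.ofReal ((1 - θ) * ((p₀ / (1 - θ)) / (p₀ / (1 - θ) - 1))))
          (fun x => (t x)⁻¹) ≤ C)
    (hD : avgE (dyadic n k m) (ENNReal.ofReal p₁) w *
        avgE (dyadic n k m) (ENNReal.ofReal (θ * ((p₁ / θ) / (p₁ / θ - 1))))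
          (fun x => (w x)⁻¹) ≤ D) :
    cubeNorm p₀ t k m ^ (1 - θ) * cubeNorm p₁ w k m ^ θ ≤
      C ^ (1 - θ) * D ^ θ * cubeNorm p (fun x => t x ^ (1 - θ) * w x ^ θ) k m := by
  have hp0 := interp_pos hθ hθ1 hp₀ hp₁ hp
  have h1θ : 0 < 1 - θ := by linarith
  have hp₀' : 0 < p₀ := by linarith
  have hp₁' : 0 < p₁ := by linarith
  have d0 : 0 < p₀ - (1 - θ) := by linarith
  have d1 : 0 < p₁ - θ := by linarith
  have s0 : (1 - θ) * ((p₀ / (1 - θ)) / (p₀ / (1 - θ) - 1)) = (1 - θ) * (p₀ / (p₀ - (1 - θ))) := by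
    rw [div_sub_one h1θ.ne', div_div_div_cancel_right₀ h1θ.ne']
  have s1 : θ * ((p₁ / θ) / (p₁ / θ - 1)) = θ * (p₁ / (p₁ - θ)) := by
    rw [div_sub_one hθ.ne', div_div_div_cancel_right₀ hθ.ne']
  rw [s0] at hC
  rw [s1] at hD
  have hσ : 0 < (1 - θ) * (p₀ / (p₀ - (1 - θ))) := by positivity
  have hτ : 0 < θ * (p₁ / (p₁ - θ)) := by positivity
  have hσ' : (1 - θ) / ((1 - θ) * (p₀ / (p₀ - (1 - θ)))) = 1 - (1 - θ) / p₀ := by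
    field_simp
  have hτ' : θ / (θ * (p₁ / (p₁ - θ))) = 1 - θ / p₁ := by
    field_simp
  set σ := (1 - θ) * (p₀ / (p₀ - (1 - θ)))
  set τ := θ * (p₁ / (p₁ - θ))
  set Q := dyadic n k m with hQ
  have hv0 : volume Q ≠ 0 := by
    rw [hQ, dyadic_eq_cube]; exact volume_cube_ne_zero _ (by positivity)
  have hvt : volume Q ≠ ∞ := by
    rw [hQ, dyadic_eq_cube]; exact volume_cube_ne_top _ _
  rw [avgE_ofReal _ hp₀', avgE_ofReal _ hσ] at hC
  rw [avgE_ofReal _ hp₁', avgE_ofReal _ hτ] at hD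
  set μ := (volume Q)⁻¹ • volume.restrict Q with hμ
  have : IsProbabilityMeasure μ := ⟨by
    rw [hμ, Measure.smul_apply, Measure.restrict_apply_univ, smul_eq_mul,
      ENNReal.inv_mul_cancel hv0 hvt]⟩
  have hac : ∀ {P : Rn n → Prop}, (∀ᵐ x, P x) → ∀ᵐ x ∂μ, P x := fun h =>
    Measure.ae_smul_measure (ae_restrict_of_ae h) _
  have one := one_le_prod (μ := μ) ht.1 hw.1 (hac ht.2.1) (hac hw.2.1) hθ hθ1 hp₀ hp₁ hp
    hσ hτ hσ' hτ'
  have hnorm : ∀ (s : ℝ) (f : Rn n → ℝ≥0∞), 0 < s →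
      cubeNorm s f k m = volume Q ^ (1 / s) * (∫⁻ x, f x ^ s ∂μ) ^ (1 / s) := by
    intro s f hs
    rw [hμ, lintegral_smul_measure, smul_eq_mul,
      ← ENNReal.mul_rpow_of_nonneg _ _ (by positivity), ← mul_assoc,
      ENNReal.mul_inv_cancel hv0 hvt, one_mul, cubeNorm]
  rw [hnorm _ _ hp₀', hnorm _ _ hp₁', hnorm _ _ hp0]
  set X := (∫⁻ x, t x ^ p₀ ∂μ) ^ (1 / p₀)
  set Y := (∫⁻ x, w x ^ p₁ ∂μ) ^ (1 / p₁)
  set Z := (∫⁻ x, (t x ^ (1 - θ) * w x ^ θ) ^ p ∂μ) ^ (1 / p)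
  set X' := (∫⁻ x, (t x)⁻¹ ^ σ ∂μ) ^ (1 / σ)
  set Y' := (∫⁻ x, (w x)⁻¹ ^ τ ∂μ) ^ (1 / τ)
  have hvol : (volume Q ^ (1 / p₀)) ^ (1 - θ) * (volume Q ^ (1 / p₁)) ^ θ =
      volume Q ^ (1 / p) := by
    rw [← ENNReal.rpow_mul, ← ENNReal.rpow_mul, ← ENNReal.rpow_add _ _ hv0 hvt, hp]
    congr 1; ring
  calc (volume Q ^ (1 / p₀) * X) ^ (1 - θ) * (volume Q ^ (1 / p₁) * Y) ^ θ
      = volume Q ^ (1 / p) * (X ^ (1 - θ) * Y ^ θ) := by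
        rw [ENNReal.mul_rpow_of_nonneg _ _ h1θ.le, ENNReal.mul_rpow_of_nonneg _ _ hθ.le,
          mul_mul_mul_comm, hvol]
    _ ≤ volume Q ^ (1 / p) * (X ^ (1 - θ) * Y ^ θ) * (X' ^ (1 - θ) * Y' ^ θ * Z) :=
        le_mul_of_one_le_right' one
    _ = (X * X') ^ (1 - θ) * (Y * Y') ^ θ * (volume Q ^ (1 / p) * Z) := by
        rw [ENNReal.mul_rpow_of_nonneg _ _ h1θ.le, ENNReal.mul_rpow_of_nonneg _ _ hθ.le]
        ring
    _ ≤ C ^ (1 - θ) * D ^ θ * (volume Q ^ (1 / p) * Z) := by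
        gcongr

lemma coe_nnnorm_toReal {a : ℝ≥0∞} (ha : a ≠ ∞) : (‖((a.toReal : ℝ) : ℂ)‖₊ : ℝ≥0∞) = a := by
  rw [← enorm_eq_nnnorm, ← ofReal_norm, Complex.norm_real, Real.norm_eq_abs,
    abs_of_nonneg ENNReal.toReal_nonneg, ENNReal.ofReal_toReal ha]

lemma calNorm_le {n : ℕ} {θ : ℝ} {N₀ N₁ : CSeq n → ℝ≥0∞} {lam g h : CSeq n}
    (hgh : ∀ (k : ℤ) (m : Fin n → ℤ),
      (‖lam k m‖₊ : ℝ≥0∞) ≤ (‖g k m‖₊ : ℝ≥0∞) ^ (1 - θ) * (‖h k m‖₊ : ℝ≥0∞) ^ θ) :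
    calNorm n θ N₀ N₁ lam ≤ N₀ g ^ (1 - θ) * N₁ h ^ θ :=
  iInf₂_le_of_le g h (iInf_le _ hgh)

/-- **Theorem (Calderón product of `ḃ`-spaces).** Let `0<θ<1`, `1≤p₀,p₁<∞`, `1≤q₀,q₁<∞`,
and let `{t_k}`, `{w_k}` be weight sequences in `L_{p₀}^loc` resp. `L_{p₁}^loc` satisfying
the stated Muckenhoupt-type conditions. With `1/p=(1-θ)/p₀+θ/p₁`, `1/q=(1-θ)/q₀+θ/q₁`,
`ω_k = t_k^{1-θ} w_k^θ`, one has
`(ḃ_{p₀,q₀}(ℝ^n,{t_k}))^{1-θ}·(ḃ_{p₁,q₁}(ℝ^n,{w_k}))^θ = ḃ_{p,q}(ℝ^n,{ω_k})`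
with equivalence of norms. -/
theorem stmt11 (n : ℕ) (θ p₀ p₁ q₀ q₁ p q : ℝ) (hθ : 0 < θ) (hθ1 : θ < 1)
    (hp₀ : 1 ≤ p₀) (hp₁ : 1 ≤ p₁) (hq₀ : 1 ≤ q₀) (hq₁ : 1 ≤ q₁)
    (hp : 1 / p = (1 - θ) / p₀ + θ / p₁) (hq : 1 / q = (1 - θ) / q₀ + θ / q₁)
    (t w : ℤ → Rn n → ℝ≥0∞)
    (htw : ∀ k, IsWeight (t k) ∧ IsWeight (w k))
    (htloc : ∀ (k : ℤ) (a : Rn n) (h : ℝ), 0 < h → ∫⁻ x in cube a h, t k x ^ p₀ < ∞)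
    (hwloc : ∀ (k : ℤ) (a : Rn n) (h : ℝ), 0 < h → ∫⁻ x in cube a h, w k x ^ p₁ < ∞)
    (hAt : ∃ C : ℝ≥0∞, 0 < C ∧ C < ∞ ∧ ∀ (k : ℤ) (a : Rn n) (h : ℝ), 0 < h →
      avgE (cube a h) (ENNReal.ofReal p₀) (t k) *
        avgE (cube a h)
          (ENNReal.ofReal ((1 - θ) * ((p₀ / (1 - θ)) / (p₀ / (1 - θ) - 1))))
          (fun x => (t k x)⁻¹) ≤ C)
    (hAw : ∃ C : ℝ≥0∞, 0 < C ∧ C < ∞ ∧ ∀ (k : ℤ) (a : Rn n) (h : ℝ), 0 < h →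
      avgE (cube a h) (ENNReal.ofReal p₁) (w k) *
        avgE (cube a h)
          (ENNReal.ofReal (θ * ((p₁ / θ) / (p₁ / θ - 1))))
          (fun x => (w k x)⁻¹) ≤ C) :
    ∃ c₁ c₂ : ℝ≥0∞, 0 < c₁ ∧ c₁ < ∞ ∧ 0 < c₂ ∧ c₂ < ∞ ∧
      ∀ lam : CSeq n,
        c₁ * bNorm n p q (fun k x => t k x ^ (1 - θ) * w k x ^ θ) lam ≤
            calNorm n θ (bNorm n p₀ q₀ t) (bNorm n p₁ q₁ w) lam ∧
          calNorm n θ (bNorm n p₀ q₀ t) (bNorm n p₁ q₁ w) lam ≤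
            c₂ * bNorm n p q (fun k x => t k x ^ (1 - θ) * w k x ^ θ) lam := by
  obtain ⟨C, hC0, hC1, hC⟩ := hAt
  obtain ⟨D, hD0, hD1, hD⟩ := hAw
  have hp0 := interp_pos hθ hθ1 hp₀ hp₁ hp
  have hq0 := interp_pos hθ hθ1 hq₀ hq₁ hq
  have h1θ : 0 < 1 - θ := by linarith
  have hp₀' : 0 < p₀ := by linarith
  have hp₁' : 0 < p₁ := by linarith
  have hq₀' : 0 < q₀ := by linarith
  have hq₁' : 0 < q₁ := by linarith
  have htm : ∀ k, Measurable (t k) := fun k => (htw k).1.1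
  have hwm : ∀ k, Measurable (w k) := fun k => (htw k).2.1
  have hωm : ∀ k, Measurable (fun x => t k x ^ (1 - θ) * w k x ^ θ) := fun k =>
    ((htm k).pow_const _).mul ((hwm k).pow_const _)
  have hK0 : C ^ (1 - θ) * D ^ θ ≠ 0 := mul_ne_zero
    (ENNReal.rpow_pos hC0 hC1.ne).ne' (ENNReal.rpow_pos hD0 hD1.ne).ne'
  have hK1 : C ^ (1 - θ) * D ^ θ ≠ ∞ := ENNReal.mul_ne_top
    (ENNReal.rpow_ne_top_of_nonneg h1θ.le hC1.ne) (ENNReal.rpow_ne_top_of_nonneg hθ.le hD1.ne)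
  have hsplit : ∀ s a b : ℝ≥0∞,
      (s * a) ^ (1 - θ) * (s * b) ^ θ = s * (a ^ (1 - θ) * b ^ θ) := by
    intro s a b
    rw [ENNReal.mul_rpow_of_nonneg _ _ h1θ.le, ENNReal.mul_rpow_of_nonneg _ _ hθ.le,
      mul_mul_mul_comm, ← ENNReal.rpow_add_of_nonneg _ _ h1θ.le hθ.le, sub_add_cancel,
      ENNReal.rpow_one]
  refine ⟨1, C ^ (1 - θ) * D ^ θ, one_pos, ENNReal.one_lt_top, hK0.bot_lt, hK1.lt_top,
    fun lam => ⟨?_, ?_⟩⟩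
  · rw [one_mul]
    refine le_iInf fun g => le_iInf fun h => le_iInf fun hgh => ?_
    rw [bNorm_eq_mixedNorm hp0 hωm, bNorm_eq_mixedNorm hp₀' htm, bNorm_eq_mixedNorm hp₁' hwm]
    refine (mixedNorm_mono hp0 hq0 fun k m => ?_).trans
      (mixedNorm_holder _ _ hθ hθ1 hp₀ hp₁ hq₀ hq₁ hp hq)
    rw [ENNReal.mul_rpow_of_nonneg _ (_ * _) h1θ.le, ENNReal.mul_rpow_of_nonneg _ (_ * _) hθ.le,
      mul_mul_mul_comm, hsplit]
    gcongr
    · exact hgh k m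
    · exact cubeNorm_le hθ hθ1 hp₀ hp₁ hp (htm k) (hwm k) k m
  · by_cases hfin : bNorm n p q (fun k x => t k x ^ (1 - θ) * w k x ^ θ) lam = ∞
    · rw [hfin, ENNReal.mul_top hK0]; exact le_top
    set A : ℤ → (Fin n → ℤ) → ℝ≥0∞ := fun k m => (‖lam k m‖₊ : ℝ≥0∞) *
      (scale n k * (cubeNorm p₀ (t k) k m ^ (1 - θ) * cubeNorm p₁ (w k) k m ^ θ)) with hAdef
    have hA : mixedNorm p q A ≤ C ^ (1 - θ) * D ^ θ *
        bNorm n p q (fun k x => t k x ^ (1 - θ) * w k x ^ θ) lam := by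
      rw [bNorm_eq_mixedNorm hp0 hωm, ← mixedNorm_const_mul hp0 hq0]
      refine mixedNorm_mono hp0 hq0 fun k m => ?_
      have hle : cubeNorm p₀ (t k) k m ^ (1 - θ) * cubeNorm p₁ (w k) k m ^ θ ≤ _ :=
        le_cubeNorm hθ hθ1 hp₀ hp₁ hp (htw k).1 (htw k).2 k m (C := C) (D := D)
          (by rw [dyadic_eq_cube]; exact hC k _ _ (by positivity))
          (by rw [dyadic_eq_cube]; exact hD k _ _ (by positivity))
      calc A k m ≤ (‖lam k m‖₊ : ℝ≥0∞) * (scale n k * (C ^ (1 - θ) * D ^ θ *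
            cubeNorm p (fun x => t k x ^ (1 - θ) * w k x ^ θ) k m)) := by
            simp only [hAdef]; gcongr
        _ = _ := by ring
    have hAfin : mixedNorm p q A ≠ ∞ := (hA.trans_lt (ENNReal.mul_lt_top hK1.lt_top
      (lt_top_iff_ne_top.mpr hfin))).ne
    refine le_trans ?_ hA
    -- `A = G^{1-θ} H^θ` is factored in the unweighted spaces; dividing `G` and `H` by the weights
    -- `T` and `W` gives the factors of `lam`.
    set T : ℤ → (Fin n → ℤ) → ℝ≥0∞ := fun k m => scale n k * cubeNorm p₀ (t k) k m with hT
    set W : ℤ → (Fin n → ℤ) → ℝ≥0∞ := fun k m => scale n k * cubeNorm p₁ (w k) k m with hW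
    have hT0 : ∀ k m, T k m ≠ 0 := fun k m =>
      mul_ne_zero (scale_ne_zero n k) (cubeNorm_ne_zero hp₀' (htw k).1 k m)
    have hT1 : ∀ k m, T k m ≠ ∞ := fun k m =>
      ENNReal.mul_ne_top (scale_ne_top n k) (cubeNorm_ne_top hp₀' (htloc k) k m)
    have hW0 : ∀ k m, W k m ≠ 0 := fun k m =>
      mul_ne_zero (scale_ne_zero n k) (cubeNorm_ne_zero hp₁' (htw k).2 k m)
    have hW1 : ∀ k m, W k m ≠ ∞ := fun k m =>
      ENNReal.mul_ne_top (scale_ne_top n k) (cubeNorm_ne_top hp₁' (hwloc k) k m)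
    set G := calFactor p q p₀ q₀ A
    set H := calFactor p q p₁ q₁ A
    have hG : ∀ k m, G k m / T k m ≠ ∞ := fun k m =>
      ENNReal.div_ne_top (calFactor_ne_top hp0 hq0 hp₀' hAfin k m) (hT0 k m)
    have hH : ∀ k m, H k m / W k m ≠ ∞ := fun k m =>
      ENNReal.div_ne_top (calFactor_ne_top hp0 hq0 hp₁' hAfin k m) (hW0 k m)
    refine (calNorm_le (g := fun k m => (((G k m / T k m).toReal : ℝ) : ℂ))
      (h := fun k m => (((H k m / W k m).toReal : ℝ) : ℂ)) fun k m => ?_).trans_eq ?_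
    · rw [coe_nnnorm_toReal (hG k m), coe_nnnorm_toReal (hH k m),
        ENNReal.div_rpow_of_nonneg _ _ h1θ.le, ENNReal.div_rpow_of_nonneg _ _ hθ.le]
      have hTW : T k m ^ (1 - θ) * W k m ^ θ =
          scale n k * (cubeNorm p₀ (t k) k m ^ (1 - θ) * cubeNorm p₁ (w k) k m ^ θ) :=
        hsplit _ _ _
      have ha0 : T k m ^ (1 - θ) ≠ 0 := (ENNReal.rpow_pos (hT0 k m).bot_lt (hT1 k m)).ne'
      have ha1 : T k m ^ (1 - θ) ≠ ∞ := ENNReal.rpow_ne_top_of_ne_zero (hT0 k m) (hT1 k m)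
      have hb0 : W k m ^ θ ≠ 0 := (ENNReal.rpow_pos (hW0 k m).bot_lt (hW1 k m)).ne'
      have hb1 : W k m ^ θ ≠ ∞ := ENNReal.rpow_ne_top_of_ne_zero (hW0 k m) (hW1 k m)
      rw [div_eq_mul_inv, div_eq_mul_inv, mul_mul_mul_comm,
        calFactor_mul hθ hθ1 hp₀ hp₁ hq₀ hq₁ hp hq hAfin,
        ← ENNReal.mul_inv (Or.inl ha0) (Or.inl ha1), ← div_eq_mul_inv,
        ENNReal.le_div_iff_mul_le (Or.inl (mul_ne_zero ha0 hb0))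
          (Or.inl (ENNReal.mul_ne_top ha1 hb1)), hTW]
    · have eG : ∀ k m, (‖(((G k m / T k m).toReal : ℝ) : ℂ)‖₊ : ℝ≥0∞) *
          (scale n k * cubeNorm p₀ (t k) k m) = G k m := fun k m => by
        rw [coe_nnnorm_toReal (hG k m)]; exact ENNReal.div_mul_cancel (hT0 k m) (hT1 k m)
      have eH : ∀ k m, (‖(((H k m / W k m).toReal : ℝ) : ℂ)‖₊ : ℝ≥0∞) *
          (scale n k * cubeNorm p₁ (w k) k m) = H k m := fun k m => by
        rw [coe_nnnorm_toReal (hH k m)]; exact ENNReal.div_mul_cancel (hW0 k m) (hW1 k m)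
      rw [bNorm_eq_mixedNorm hp₀' htm, bNorm_eq_mixedNorm hp₁' hwm]
      simp_rw [eG, eH]
      have nG : mixedNorm p₀ q₀ G = mixedNorm p q A ^ (q / q₀) :=
        mixedNorm_calFactor hp0 hq0 hp₀' hq₀' hAfin
      have nH : mixedNorm p₁ q₁ H = mixedNorm p q A ^ (q / q₁) :=
        mixedNorm_calFactor hp0 hq0 hp₁' hq₁' hAfin
      have e1 : q / q₀ * (1 - θ) + q / q₁ * θ = 1 := by
        have := interp_mul hq0 hq
        linarith
      change mixedNorm p₀ q₀ G ^ (1 - θ) * mixedNorm p₁ q₁ H ^ θ = _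
      rw [nG, nH, ← ENNReal.rpow_mul, ← ENNReal.rpow_mul,
        ← ENNReal.rpow_add_of_nonneg _ _ (by positivity) (by positivity), e1, ENNReal.rpow_one]

end
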